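/- Evidence lower bound decomposition for the DGP variational family: in the N-point layered setup below, with joint model density p(y, f_N, f_M) := [∏_{n=1}^{N} p_n(f_n^L)] · [∏_{l=1}^{L} N(f_N^l; A^l(f_N^{l−1}) f_M^l, B^l(f_N^{l−1}))] · [∏_{l=1}^{L} N(f_M^l; 0, P^l)] and variational density q(f_N, f_M) := N(f_M; μ_M, S_M) · ∏_{l=1}^{L} N(f_N^l; A^l(f_N^{l−1}) f_M^l, B^l(f_N^{l−1})), and assuming all integrals below converge absolutely, the evidence lower bound satisfies ∫ q(f_N, f_M) log( p(y, f_N, f_M) / q(f_N, f_M) ) df_N df_M = Σ_{n=1}^{N} ∫ q_n(f) log p_n(f) df − ∫ N(f_M; μ_M, S_M) log( N(f_M; μ_M, S_M) / ∏_{l=1}^{L} N(f_M^l; 0, P^l) ) df_M, where q_n(f) := ∫ q(f_N, f_M) df_M ∏_{n'≠n} df_{n'}^L ∏_{l=1}^{L−1} df_N^l is the marginal density of f_n^L under q; i.e. the ELBO equals the sum of per-datapoint expected log-likelihoods minus the KL divergence from q(f_M) to the prior over inducing outputs. -/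

import Mathlib

open Matrix MeasureTheory Real

noncomputable section

/-- The multivariate Gaussian density
`N(x; μ, S) = (2π)^{−d/2} (det S)^{−1/2} exp(−(1/2)(x−μ)ᵀ S⁻¹ (x−μ))`. -/
def gaussPDF {ι : Type*} [Fintype ι] [DecidableEq ι]
    (μ : ι → ℝ) (S : Matrix ι ι ℝ) (x : ι → ℝ) : ℝ :=
  (2 * Real.pi) ^ (-(Fintype.card ι : ℝ) / 2) * S.det ^ (-(1 : ℝ) / 2) *
    Real.exp (-(1 / 2 : ℝ) * ((x - μ) ⬝ᵥ (S⁻¹ *ᵥ (x - μ))))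

/-- Coordinates of the full `N`-point trajectory `(f_N^0, f_N^1, …, f_N^L)`; the number
of layers is `K + 1 ≥ 1` and layer outputs are indexed by `l : Fin (K + 2)`. -/
abbrev TrajIx (K N : ℕ) (T : Fin (K + 2) → ℕ) : Type :=
  (l : Fin (K + 2)) × (Fin N × Fin (T l))

/-- Coordinates of the latent variables `f_N = (f_N^1, …, f_N^L)` (everything except the
fixed input layer `0`). -/
abbrev LatentIx (K N : ℕ) (T : Fin (K + 2) → ℕ) : Type :=
  {p : TrajIx K N T // p.1 ≠ 0}

/-- Inducing-output coordinates `f_M = (f_M^1, …, f_M^L)`. -/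
abbrev IndIx (K : ℕ) (m : Fin (K + 1) → ℕ) : Type := (l : Fin (K + 1)) × Fin (m l)

/-- The full trajectory determined by the fixed inputs `f0` and the latent variables
contained in `w`. -/
def traj {K N : ℕ} {T : Fin (K + 2) → ℕ} {m : Fin (K + 1) → ℕ}
    (f0 : Fin N × Fin (T 0) → ℝ) (w : (LatentIx K N T ⊕ IndIx K m) → ℝ) :
    TrajIx K N T → ℝ :=
  fun p =>
    if h : p.1 = 0 then f0 (p.2.1, Fin.cast (show T p.1 = T 0 by rw [h]) p.2.2)
    else w (Sum.inl ⟨p, h⟩)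

/-- The variational density
`q(f_N, f_M) = N(f_M; μ_M, S_M) ∏_l N(f_N^l; A^l(f_N^{l−1}) f_M^l, B^l(f_N^{l−1}))`. -/
def qdens {K N : ℕ} {T : Fin (K + 2) → ℕ} {m : Fin (K + 1) → ℕ}
    (f0 : Fin N × Fin (T 0) → ℝ)
    (μM : IndIx K m → ℝ) (SM : Matrix (IndIx K m) (IndIx K m) ℝ)
    (A : ∀ l : Fin (K + 1), ((Fin N × Fin (T l.castSucc)) → ℝ) →
      Matrix (Fin N × Fin (T l.succ)) (Fin (m l)) ℝ)
    (B : ∀ l : Fin (K + 1), ((Fin N × Fin (T l.castSucc)) → ℝ) →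
      Matrix (Fin N × Fin (T l.succ)) (Fin N × Fin (T l.succ)) ℝ)
    (w : (LatentIx K N T ⊕ IndIx K m) → ℝ) : ℝ :=
  gaussPDF μM SM (fun k => w (Sum.inr k)) *
    ∏ l : Fin (K + 1),
      gaussPDF
        (A l (fun q => traj f0 w ⟨l.castSucc, q⟩) *ᵥ fun c => w (Sum.inr ⟨l, c⟩))
        (B l fun q => traj f0 w ⟨l.castSucc, q⟩)
        (fun q => traj f0 w ⟨l.succ, q⟩)

/-- The joint model density
`p(y, f_N, f_M) = [∏_n p_n(f_n^L)] [∏_l N(f_N^l; A^l(f_N^{l−1}) f_M^l, B^l(f_N^{l−1}))]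
[∏_l N(f_M^l; 0, P^l)]`. -/
def pdens {K N : ℕ} {T : Fin (K + 2) → ℕ} {m : Fin (K + 1) → ℕ}
    (f0 : Fin N × Fin (T 0) → ℝ)
    (pLik : Fin N → (Fin (T (Fin.last (K + 1))) → ℝ) → ℝ)
    (A : ∀ l : Fin (K + 1), ((Fin N × Fin (T l.castSucc)) → ℝ) →
      Matrix (Fin N × Fin (T l.succ)) (Fin (m l)) ℝ)
    (B : ∀ l : Fin (K + 1), ((Fin N × Fin (T l.castSucc)) → ℝ) →
      Matrix (Fin N × Fin (T l.succ)) (Fin N × Fin (T l.succ)) ℝ)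
    (P : ∀ l : Fin (K + 1), Matrix (Fin (m l)) (Fin (m l)) ℝ)
    (w : (LatentIx K N T ⊕ IndIx K m) → ℝ) : ℝ :=
  (∏ n' : Fin N, pLik n' fun i => traj f0 w ⟨Fin.last (K + 1), (n', i)⟩) *
    (∏ l : Fin (K + 1),
      gaussPDF
        (A l (fun q => traj f0 w ⟨l.castSucc, q⟩) *ᵥ fun c => w (Sum.inr ⟨l, c⟩))
        (B l fun q => traj f0 w ⟨l.castSucc, q⟩)
        (fun q => traj f0 w ⟨l.succ, q⟩)) *
    ∏ l : Fin (K + 1), gaussPDF (0 : Fin (m l) → ℝ) (P l) (fun c => w (Sum.inr ⟨l, c⟩))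

/-- The latent coordinates other than the final-layer output of data point `n`. -/
abbrev RestIx (K N : ℕ) (T : Fin (K + 2) → ℕ) (n : Fin N) : Type :=
  {p : TrajIx K N T // p.1 ≠ 0 ∧ ¬(p.1 = Fin.last (K + 1) ∧ p.2.1 = n)}

/-- Reassemble the latent variables (and inducing outputs) from `v` together with the
prescribed final-layer output `y` of data point `n`. -/
def reassemble {K N : ℕ} {T : Fin (K + 2) → ℕ} {m : Fin (K + 1) → ℕ} (n : Fin N)
    (y : Fin (T (Fin.last (K + 1))) → ℝ) (v : (RestIx K N T n ⊕ IndIx K m) → ℝ) :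
    (LatentIx K N T ⊕ IndIx K m) → ℝ :=
  fun x =>
    match x with
    | Sum.inr k => v (Sum.inr k)
    | Sum.inl p =>
        if h : p.val.1 = Fin.last (K + 1) ∧ p.val.2.1 = n then
          y (Fin.cast (show T p.val.1 = T (Fin.last (K + 1)) by rw [h.1]) p.val.2.2)
        else v (Sum.inl ⟨p.val, p.property, h⟩)

/-- `q_n`, the marginal density of `f_n^L` under `q`. -/
def qmarg {K N : ℕ} {T : Fin (K + 2) → ℕ} {m : Fin (K + 1) → ℕ}
    (f0 : Fin N × Fin (T 0) → ℝ)
    (μM : IndIx K m → ℝ) (SM : Matrix (IndIx K m) (IndIx K m) ℝ)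
    (A : ∀ l : Fin (K + 1), ((Fin N × Fin (T l.castSucc)) → ℝ) →
      Matrix (Fin N × Fin (T l.succ)) (Fin (m l)) ℝ)
    (B : ∀ l : Fin (K + 1), ((Fin N × Fin (T l.castSucc)) → ℝ) →
      Matrix (Fin N × Fin (T l.succ)) (Fin N × Fin (T l.succ)) ℝ)
    (n : Fin N) (y : Fin (T (Fin.last (K + 1))) → ℝ) : ℝ :=
  ∫ v : (RestIx K N T n ⊕ IndIx K m) → ℝ, qdens f0 μM SM A B (reassemble n y v)

/-!
The layer densities `N(f_N^l; A^l f_M^l, B^l)` occur both in `p` and in `q`, so `log (p / q)` is a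
sum of the terms `log p_n(f_n^L)` minus `log (N(f_M; μ_M, S_M) / ∏_l N(f_M^l; 0, P^l))`. Each term
depends on one group of coordinates only, so by Fubini its expectation under `q` is its
expectation under the corresponding marginal of `q`. The marginal of `f_M` is `N(μ_M, S_M)`: each
layer density integrates to `1` over its own layer given the earlier ones, so integrating out the
layers from the last to the first leaves the Gaussian factor. That a Gaussian density has total
mass `1` follows from the substitution `x = M z + μ` with `S = M Mᵀ`.
-/

section Matrices

variable {α ι R : Type*} [MeasurableSpace α] [Fintype ι] [MeasurableSpace R]

lemma measurable_dotProduct [NonUnitalNonAssocSemiring R] [MeasurableAdd₂ R]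
    [MeasurableMul₂ R] {v w : α → ι → R} (hv : Measurable v) (hw : Measurable w) :
    Measurable fun a => v a ⬝ᵥ w a := by
  unfold dotProduct
  fun_prop

lemma measurable_mulVec {κ : Type*} [NonUnitalNonAssocSemiring R] [MeasurableAdd₂ R]
    [MeasurableMul₂ R] {M : α → Matrix κ ι R} {v : α → ι → R}
    (hM : ∀ i j, Measurable fun a => M a i j) (hv : Measurable v) :
    Measurable fun a => M a *ᵥ v a :=
  measurable_pi_lambda _ fun i => measurable_dotProduct (measurable_pi_lambda _ (hM i)) hv

variable [DecidableEq ι]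

lemma measurable_matrix_det [CommRing R] [MeasurableAdd₂ R] [MeasurableMul₂ R]
    {M : α → Matrix ι ι R} (hM : ∀ i j, Measurable fun a => M a i j) :
    Measurable fun a => (M a).det := by
  simp only [det_apply']
  fun_prop

lemma measurable_matrix_inv_apply [Field R] [MeasurableAdd₂ R] [MeasurableMul₂ R]
    [MeasurableInv R] {M : α → Matrix ι ι R} (hM : ∀ i j, Measurable fun a => M a i j)
    (i j : ι) : Measurable fun a => (M a)⁻¹ i j := by
  have hadj : Measurable fun a => (M a).adjugate i j := by
    simp only [adjugate_apply]
    refine measurable_matrix_det fun k l => ?_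
    rcases eq_or_ne k j with rfl | hk
    · simp only [updateRow_self, measurable_const]
    · simp only [updateRow_ne hk, hM k l]
  simp only [inv_def, Ring.inverse_eq_inv', Matrix.smul_apply, smul_eq_mul]
  exact (measurable_matrix_det hM).inv.mul hadj

lemma integral_comp_mulVec {E : Type*} [NormedAddCommGroup E] [NormedSpace ℝ E]
    {M : Matrix ι ι ℝ} (hM : M.det ≠ 0) (f : (ι → ℝ) → E) :
    ∫ z, f (M *ᵥ z) = |M.det|⁻¹ • ∫ x, f x := by
  have hemb : MeasurableEmbedding (toLin' M) :=
    (LinearMap.continuous_of_finiteDimensional _).measurableEmbedding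
      (mulVec_injective_of_isUnit ((isUnit_iff_isUnit_det M).mpr hM.isUnit))
  calc ∫ z, f (M *ᵥ z) = ∫ x, f x ∂(volume.map (toLin' M)) := (hemb.integral_map f).symm
    _ = |M.det|⁻¹ • ∫ x, f x := by
      rw [Real.map_matrix_volume_pi_eq_smul_volume_pi hM, integral_smul_measure,
        ENNReal.toReal_ofReal (abs_nonneg _), abs_inv]

open scoped MatrixOrder ComplexOrder in
lemma exists_eq_mul_transpose_of_posDef {S : Matrix ι ι ℝ} (hS : S.PosDef) :
    ∃ M : Matrix ι ι ℝ, M.det ≠ 0 ∧ S = M * Mᵀ := by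
  obtain ⟨M, hM⟩ := CStarAlgebra.nonneg_iff_eq_mul_star_self.mp hS.posSemidef.nonneg
  rw [star_eq_conjTranspose, conjTranspose_eq_transpose_of_trivial] at hM
  refine ⟨M, fun h => hS.det_pos.ne' ?_, hM⟩
  rw [hM, det_mul, h, zero_mul]

end Matrices

section Gaussian

variable {ι : Type*} [Fintype ι] [DecidableEq ι]

lemma gaussPDF_pos (μ : ι → ℝ) {S : Matrix ι ι ℝ} (hS : S.PosDef) (x : ι → ℝ) :
    0 < gaussPDF μ S x := by
  have := hS.det_pos
  unfold gaussPDF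
  positivity

lemma measurable_gaussPDF_comp {α : Type*} [MeasurableSpace α]
    {μ : α → ι → ℝ} {S : α → Matrix ι ι ℝ} {x : α → ι → ℝ}
    (hμ : Measurable μ) (hS : ∀ i j, Measurable fun a => S a i j) (hx : Measurable x) :
    Measurable fun a => gaussPDF (μ a) (S a) (x a) := by
  have hdet := measurable_matrix_det hS
  have hquad : Measurable fun a => (x a - μ a) ⬝ᵥ ((S a)⁻¹ *ᵥ (x a - μ a)) :=
    measurable_dotProduct (hx.sub hμ)
      (measurable_mulVec (measurable_matrix_inv_apply hS) (hx.sub hμ))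
  unfold gaussPDF
  fun_prop

lemma measurable_gaussPDF (μ : ι → ℝ) (S : Matrix ι ι ℝ) : Measurable (gaussPDF μ S) :=
  measurable_gaussPDF_comp measurable_const (fun _ _ => measurable_const) measurable_id

lemma gaussPDF_zero_one (x : ι → ℝ) :
    gaussPDF 0 1 x = ∏ i, ProbabilityTheory.gaussianPDFReal 0 1 (x i) := by
  have hconst : (2 * π) ^ (-(Fintype.card ι : ℝ) / 2) = (√(2 * π))⁻¹ ^ Fintype.card ι := by
    rw [Real.sqrt_eq_rpow, ← Real.rpow_neg (by positivity), ← Real.rpow_mul_natCast (by positivity)]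
    ring_nf
  simp only [gaussPDF, ProbabilityTheory.gaussianPDFReal, hconst, det_one, Real.one_rpow, mul_one,
    inv_one, one_mulVec, sub_zero, NNReal.coe_one, Finset.prod_mul_distrib, Finset.prod_const,
    Finset.card_univ, ← Real.exp_sum, dotProduct, Finset.mul_sum]
  ring_nf

lemma gaussPDF_mulVec_add (μ : ι → ℝ) {M : Matrix ι ι ℝ} (hM : M.det ≠ 0) (z : ι → ℝ) :
    gaussPDF μ (M * Mᵀ) (M *ᵥ z + μ) = |M.det|⁻¹ * gaussPDF 0 1 z := by
  have hdet : (M * Mᵀ).det ^ (-(1 : ℝ) / 2) = |M.det|⁻¹ := by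
    rw [det_mul, det_transpose, ← sq, ← sq_abs, ← Real.rpow_natCast,
      ← Real.rpow_mul (abs_nonneg _), ← Real.rpow_neg_one]
    norm_num
  have hquad : (M *ᵥ z) ⬝ᵥ ((M * Mᵀ)⁻¹ *ᵥ (M *ᵥ z)) = z ⬝ᵥ z := by
    rw [Matrix.mul_inv_rev, ← mulVec_mulVec, mulVec_mulVec z, nonsing_inv_mul _ hM.isUnit,
      one_mulVec, dotProduct_mulVec, ← mulVec_transpose, ← transpose_nonsing_inv,
      transpose_transpose, mulVec_mulVec, nonsing_inv_mul _ hM.isUnit, one_mulVec]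
  simp only [gaussPDF, hdet, add_sub_cancel_right, hquad, det_one, Real.one_rpow, inv_one,
    one_mulVec, sub_zero]
  ring

lemma integral_gaussPDF (μ : ι → ℝ) {S : Matrix ι ι ℝ} (hS : S.PosDef) :
    ∫ x, gaussPDF μ S x = 1 := by
  obtain ⟨M, hM, rfl⟩ := exists_eq_mul_transpose_of_posDef hS
  have hstd : ∫ z : ι → ℝ, gaussPDF 0 1 z = 1 := by
    simp only [gaussPDF_zero_one, integral_fintype_prod_volume_eq_pow,
      ProbabilityTheory.integral_gaussianPDFReal_eq_one 0 one_ne_zero, one_pow]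
  have hsubst := integral_comp_mulVec hM fun x => gaussPDF μ (M * Mᵀ) (x + μ)
  simp only [gaussPDF_mulVec_add μ hM, integral_const_mul, hstd, smul_eq_mul,
    integral_add_right_eq_self (fun x => gaussPDF μ (M * Mᵀ) x)] at hsubst
  exact (mul_left_cancel₀ (inv_ne_zero (abs_ne_zero.mpr hM)) hsubst).symm

lemma integrable_gaussPDF (μ : ι → ℝ) {S : Matrix ι ι ℝ} (hS : S.PosDef) :
    Integrable (gaussPDF μ S) :=
  .of_integral_ne_zero (by rw [integral_gaussPDF μ hS]; exact one_ne_zero)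

lemma lintegral_gaussPDF (μ : ι → ℝ) {S : Matrix ι ι ℝ} (hS : S.PosDef) :
    ∫⁻ x, ENNReal.ofReal (gaussPDF μ S x) = 1 := by
  rw [← ofReal_integral_eq_lintegral_ofReal (integrable_gaussPDF μ hS)
    (.of_forall fun x => (gaussPDF_pos μ hS x).le),
    integral_gaussPDF μ hS, ENNReal.ofReal_one]

end Gaussian

section Marginal

variable {δ : Type*} [DecidableEq δ] {X : δ → Type*} [∀ i, MeasurableSpace (X i)]
  {μ : ∀ i, Measure (X i)}

lemma lmarginal_mul_of_dependsOn_compl {s : Finset δ} {f g : (∀ i, X i) → ENNReal}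
    (hf : DependsOn f (s : Set δ)ᶜ) (hg : Measurable g) :
    lmarginal μ s (f * g) = f * lmarginal μ s g := by
  ext x
  have hfx (y : ∀ i : s, X i) : f (Function.updateFinset x s y) = f x :=
    hf fun i hi => by simp [Function.updateFinset, Finset.mem_coe.not.mp hi]
  simp only [lmarginal, Pi.mul_apply, hfx]
  exact lintegral_const_mul _ (hg.comp measurable_updateFinset)

lemma lmarginal_image_eq_lintegral [∀ i, SigmaFinite (μ i)] {ι : Type*} [Fintype ι]
    {e : ι → δ} (he : Function.Injective e) {f : (∀ i, X i) → ENNReal}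
    {g : (∀ j, X (e j)) → ENNReal} (hg : Measurable g) {x : ∀ i, X i}
    (hfg : ∀ z, (∀ i ∉ Set.range e, z i = x i) → f z = g fun j => z (e j)) :
    lmarginal μ (Finset.univ.image e) f x = ∫⁻ y, g y ∂Measure.pi fun j => μ (e j) := by
  classical
  have hfreeze (y) : f (Function.updateFinset x (Finset.univ.image e) y) =
      g fun j => Function.updateFinset x (Finset.univ.image e) y (e j) :=
    hfg _ fun i hi => dif_neg (by simpa using hi)
  calc lmarginal μ (Finset.univ.image e) f x
      = lmarginal μ (Finset.univ.image e) (g ∘ fun z j => z (e j)) x := by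
        simp only [lmarginal, hfreeze, Function.comp_apply]
    _ = ∫⁻ y, g y ∂Measure.pi fun j => μ (e j) := by
        rw [lmarginal_image he _ hg, lmarginal_univ]

-- The last layer integrates to `1` given the earlier ones, so the layers are integrated out
-- from the last to the first.
lemma lmarginal_prod_eq_one [Fintype δ] [∀ i, SigmaFinite (μ i)] {Λ : Type*} [LinearOrder Λ]
    {layer : δ → Λ} {k : Λ → (∀ i, X i) → ENNReal} (hk : ∀ l, Measurable (k l))
    (hdep : ∀ l, DependsOn (k l) {i | layer i ≤ l})
    (hone : ∀ l, lmarginal μ {i | layer i = l} (k l) = 1) (s : Finset Λ) :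
    lmarginal μ {i | layer i ∈ s} (∏ l ∈ s, k l) = 1 := by
  induction s using Finset.induction_on_max with
  | empty => simp
  | insert a s hlt ih =>
    have hunion : ({i | layer i ∈ insert a s} : Finset δ) =
        ({i | layer i ∈ s} : Finset δ) ∪ ({i | layer i = a} : Finset δ) := by
      ext i
      simp [or_comm]
    have hdisj : Disjoint ({i | layer i ∈ s} : Finset δ) ({i | layer i = a} : Finset δ) :=
      Finset.disjoint_filter.mpr fun i _ hi hia => (hlt _ hi).ne hia
    have hearlier : DependsOn (∏ l ∈ s, k l) (({i | layer i = a} : Finset δ) : Set δ)ᶜ := by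
      intro x y hxy
      simp only [Finset.prod_apply]
      refine Finset.prod_congr rfl fun l hl => hdep l fun i hi => hxy i ?_
      simpa using ((Set.mem_ofPred.mp hi).trans_lt (hlt l hl)).ne
    have hmeas : Measurable (∏ l ∈ insert a s, k l) :=
      Finset.prod_induction _ _ (fun _ _ => Measurable.mul) measurable_const fun l _ => hk l
    rw [hunion, lmarginal_union μ _ hmeas hdisj,
      Finset.prod_insert fun ha => (hlt a ha).false, mul_comm,
      lmarginal_mul_of_dependsOn_compl hearlier (hk a), hone, mul_one, ih]

end Marginal

section Fubini

variable {X Y : Type*} [MeasurableSpace X] [MeasurableSpace Y] {μ : Measure X} {ν : Measure Y}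
  [SFinite μ] [SFinite ν] {q : X × Y → ℝ} {φ : X → ℝ}

lemma integrable_mul_fst_of_integrable_marginal (hq : Integrable q (μ.prod ν)) (hq0 : 0 ≤ q)
    (hφ : AEStronglyMeasurable φ μ)
    (hqφ : Integrable (fun x => (∫ y, q (x, y) ∂ν) * φ x) μ) :
    Integrable (fun p => q p * φ p.1) (μ.prod ν) := by
  have hmeas : AEStronglyMeasurable (fun p => q p * φ p.1) (μ.prod ν) := hq.1.mul hφ.comp_fst
  refine (integrable_prod_iff hmeas).mpr
    ⟨hq.prod_right_ae.mono fun x hx => hx.mul_const (φ x), hqφ.norm.congr (.of_forall fun x => ?_)⟩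
  have hmarg : 0 ≤ ∫ y, q (x, y) ∂ν := integral_nonneg fun y => hq0 (x, y)
  simp only [norm_mul, integral_mul_const, Real.norm_of_nonneg hmarg,
    fun y => Real.norm_of_nonneg (hq0 (x, y))]

lemma integral_mul_fst_eq_integral_marginal (hqφ : Integrable (fun p => q p * φ p.1) (μ.prod ν)) :
    ∫ p, q p * φ p.1 ∂μ.prod ν = ∫ x, (∫ y, q (x, y) ∂ν) * φ x ∂μ := by
  simp only [integral_prod _ hqφ, integral_mul_const]

end Fubini

section Coordinates

variable {α β γ : Type*}

lemma measurable_sumElim_left {X : Type*} [MeasurableSpace X] (g : β → X) :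
    Measurable fun f : α → X => Sum.elim f g :=
  measurable_pi_lambda _ <|
    Sum.rec (fun a => measurable_pi_apply a) fun _ => measurable_const

/-- Glue a vector indexed by `α` and one indexed by `β` along a splitting `e` of the index type
`γ`; used to integrate over one group of coordinates of `γ → ℝ` at a time. -/
def glue (e : α ⊕ β ≃ γ) : (α → ℝ) × (β → ℝ) ≃ᵐ (γ → ℝ) :=
  (MeasurableEquiv.sumPiEquivProdPi fun _ => ℝ).symm.trans (.arrowCongr' e (.refl ℝ))

lemma glue_apply (e : α ⊕ β ≃ γ) (p : (α → ℝ) × (β → ℝ)) (i : α ⊕ β) :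
    glue e p (e i) = Sum.elim p.1 p.2 i := by
  change (MeasurableEquiv.sumPiEquivProdPi fun _ => ℝ).symm p (e.symm (e i)) = _
  rw [e.symm_apply_apply]
  cases i <;> rfl

lemma glue_sumComm (x : α → ℝ) (y : β → ℝ) :
    glue (Equiv.sumComm α β) (x, y) = Sum.elim y x := by
  ext (b | a)
  · exact glue_apply (Equiv.sumComm α β) (x, y) (Sum.inr b)
  · exact glue_apply (Equiv.sumComm α β) (x, y) (Sum.inl a)

variable [Fintype α] [Fintype β] [Fintype γ]

lemma measurePreserving_glue (e : α ⊕ β ≃ γ) : MeasurePreserving (glue e) :=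
  (volume_preserving_arrowCongr' e _ (.id volume)).comp
    (volume_measurePreserving_sumPiEquivProdPi_symm fun _ => ℝ)

lemma integrable_and_integral_mul_comp_eq (e : α ⊕ β ≃ γ) {q : (γ → ℝ) → ℝ} {φ : (α → ℝ) → ℝ}
    (hq : Integrable q) (hq0 : 0 ≤ q) (hφ : AEStronglyMeasurable φ)
    (hqφ : Integrable fun x => (∫ y, q (glue e (x, y))) * φ x) :
    Integrable (fun w => q w * φ fun a => w (e (Sum.inl a))) ∧
      ∫ w, q w * φ (fun a => w (e (Sum.inl a))) = ∫ x, (∫ y, q (glue e (x, y))) * φ x := by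
  have hglue := measurePreserving_glue e
  have hfst (p : (α → ℝ) × (β → ℝ)) : (fun a => glue e p (e (Sum.inl a))) = p.1 := by
    simp only [glue_apply, Sum.elim_inl]
  have hint : Integrable fun p : (α → ℝ) × (β → ℝ) => q (glue e p) * φ p.1 :=
    integrable_mul_fst_of_integrable_marginal (hglue.integrable_comp_of_integrable hq)
      (fun p => hq0 (glue e p)) hφ hqφ
  constructor
  · rw [← hglue.integrable_comp_emb (glue e).measurableEmbedding]
    simpa only [Function.comp_def, hfst] using hint
  · rw [← hglue.integral_comp']
    simp only [hfst]
    exact integral_mul_fst_eq_integral_marginal hint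

end Coordinates

section Layers

variable {K N : ℕ} {T : Fin (K + 2) → ℕ} {m : Fin (K + 1) → ℕ}
  (f0 : Fin N × Fin (T 0) → ℝ)
  (A : ∀ l : Fin (K + 1), ((Fin N × Fin (T l.castSucc)) → ℝ) →
    Matrix (Fin N × Fin (T l.succ)) (Fin (m l)) ℝ)
  (B : ∀ l : Fin (K + 1), ((Fin N × Fin (T l.castSucc)) → ℝ) →
    Matrix (Fin N × Fin (T l.succ)) (Fin N × Fin (T l.succ)) ℝ)

/-- The conditional density of the `l`-th layer's output given the previous layer's output and the
inducing outputs, `N(f_N^l; A^l(f_N^{l−1}) f_M^l, B^l(f_N^{l−1}))`; here `l` is zero-based, so that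
the output lives in layer `l.succ` of the trajectory. -/
def layerDens (l : Fin (K + 1)) (w : LatentIx K N T ⊕ IndIx K m → ℝ) : ℝ :=
  gaussPDF
    (A l (fun q => traj f0 w ⟨l.castSucc, q⟩) *ᵥ fun c => w (Sum.inr ⟨l, c⟩))
    (B l fun q => traj f0 w ⟨l.castSucc, q⟩)
    (fun q => traj f0 w ⟨l.succ, q⟩)

/-- The zero-based layer to which a latent coordinate belongs, matching the indexing of
`layerDens`. -/
def latentLayer (p : LatentIx K N T) : Fin (K + 1) := p.1.1.pred p.2

/-- The latent coordinate holding an output coordinate of the (zero-based) layer `l`. -/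
def layerOutput (l : Fin (K + 1)) (q : Fin N × Fin (T l.succ)) : LatentIx K N T :=
  ⟨⟨l.succ, q⟩, l.succ_ne_zero⟩

lemma layerOutput_injective (l : Fin (K + 1)) :
    Function.Injective (layerOutput (N := N) (T := T) l) := fun _ _ h =>
  eq_of_heq (Sigma.mk.inj_iff.mp (congrArg Subtype.val h)).2

lemma image_layerOutput (l : Fin (K + 1)) :
    Finset.univ.image (layerOutput (N := N) (T := T) l) =
      ({p | latentLayer p = l} : Finset (LatentIx K N T)) := by
  ext ⟨⟨j, q⟩, hj⟩
  simp only [Finset.mem_image, Finset.mem_univ, true_and, Finset.mem_filter]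
  constructor
  · rintro ⟨q', h⟩
    rw [← h]
    exact Fin.pred_succ l
  · rintro rfl
    obtain ⟨i, rfl⟩ := Fin.exists_succ_eq.mpr hj
    exact ⟨q, rfl⟩

lemma traj_succ (w : LatentIx K N T ⊕ IndIx K m → ℝ) (l : Fin (K + 1))
    (q : Fin N × Fin (T l.succ)) :
    traj f0 w ⟨l.succ, q⟩ = w (Sum.inl (layerOutput l q)) :=
  dif_neg l.succ_ne_zero

lemma traj_castSucc_congr {w w' : LatentIx K N T ⊕ IndIx K m → ℝ} {l : Fin (K + 1)}
    (h : ∀ p, latentLayer p < l → w (Sum.inl p) = w' (Sum.inl p))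
    (q : Fin N × Fin (T l.castSucc)) :
    traj f0 w ⟨l.castSucc, q⟩ = traj f0 w' ⟨l.castSucc, q⟩ := by
  by_cases hl : l.castSucc = 0
  · simp only [traj, hl, dite_true]
  · simp only [traj, hl, dite_false]
    exact h _ (Fin.pred_castSucc_lt hl)

lemma measurable_traj (p : TrajIx K N T) :
    Measurable fun w : LatentIx K N T ⊕ IndIx K m → ℝ => traj f0 w p := by
  unfold traj
  split <;> fun_prop

variable {A B}

lemma layerDens_pos {l : Fin (K + 1)} (hBpd : ∀ x, (B l x).PosDef)
    (w : LatentIx K N T ⊕ IndIx K m → ℝ) : 0 < layerDens f0 A B l w :=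
  gaussPDF_pos _ (hBpd _) _

lemma measurable_layerDens {l : Fin (K + 1)} (hA : ∀ i j, Measurable fun x => A l x i j)
    (hB : ∀ i j, Measurable fun x => B l x i j) :
    Measurable (layerDens f0 A B l) := by
  have hlayer (j : Fin (K + 2)) :
      Measurable fun (w : LatentIx K N T ⊕ IndIx K m → ℝ) q => traj f0 w ⟨j, q⟩ :=
    measurable_pi_lambda _ fun q => measurable_traj f0 ⟨j, q⟩
  exact measurable_gaussPDF_comp
    (measurable_mulVec (fun i j => (hA i j).comp (hlayer _)) (by fun_prop))
    (fun i j => (hB i j).comp (hlayer _)) (hlayer _)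

variable (A B) in
lemma dependsOn_layerDens (l : Fin (K + 1)) (fM : IndIx K m → ℝ) :
    DependsOn (fun u => layerDens f0 A B l (Sum.elim u fM)) {p | latentLayer p ≤ l} := by
  intro u u' huu'
  have hinput (q : Fin N × Fin (T l.castSucc)) :
      traj f0 (Sum.elim u fM) ⟨l.castSucc, q⟩ = traj f0 (Sum.elim u' fM) ⟨l.castSucc, q⟩ :=
    traj_castSucc_congr f0 (fun p hp => huu' p hp.le) q
  have houtput (q : Fin N × Fin (T l.succ)) : u (layerOutput l q) = u' (layerOutput l q) :=
    huu' _ (Fin.pred_succ l).le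
  simp only [layerDens, hinput, traj_succ, Sum.elim_inl, Sum.elim_inr, houtput]

-- The mean and covariance of a layer do not involve its own output, so they stay constant while
-- that output is integrated out.
lemma lmarginal_layerDens {l : Fin (K + 1)} (hBpd : ∀ x, (B l x).PosDef) (fM : IndIx K m → ℝ) :
    lmarginal (fun _ => volume) {p : LatentIx K N T | latentLayer p = l}
      (fun u => ENNReal.ofReal (layerDens f0 A B l (Sum.elim u fM))) = 1 := by
  ext x
  let input := fun q => traj f0 (Sum.elim x fM) ⟨l.castSucc, q⟩
  let conditional : (Fin N × Fin (T l.succ) → ℝ) → ENNReal := fun y =>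
    ENNReal.ofReal (gaussPDF (A l input *ᵥ fun c => fM ⟨l, c⟩) (B l input) y)
  have hconditional : Measurable conditional := (measurable_gaussPDF _ _).ennreal_ofReal
  rw [← image_layerOutput, lmarginal_image_eq_lintegral (layerOutput_injective l) hconditional]
  · exact lintegral_gaussPDF _ (hBpd input)
  · intro z hz
    have hinput : (fun q => traj f0 (Sum.elim z fM) ⟨l.castSucc, q⟩) = input :=
      funext <| traj_castSucc_congr f0 fun p hp => hz p <| by
        rintro ⟨q, rfl⟩
        exact hp.ne (Fin.pred_succ l)
    simp only [layerDens, hinput, traj_succ, Sum.elim_inl, Sum.elim_inr, conditional]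

lemma lintegral_prod_layerDens (hA : ∀ l i j, Measurable fun x => A l x i j)
    (hB : ∀ l i j, Measurable fun x => B l x i j) (hBpd : ∀ l x, (B l x).PosDef)
    (fM : IndIx K m → ℝ) :
    ∫⁻ u, ∏ l, ENNReal.ofReal (layerDens f0 A B l (Sum.elim u fM)) = 1 := by
  have hmeas (l : Fin (K + 1)) :
      Measurable fun u => ENNReal.ofReal (layerDens f0 A B l (Sum.elim u fM)) :=
    ((measurable_layerDens f0 (hA l) (hB l)).comp (measurable_sumElim_left fM)).ennreal_ofReal
  have h := lmarginal_prod_eq_one hmeas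
    (fun l u u' h => congrArg ENNReal.ofReal (dependsOn_layerDens f0 A B l fM h))
    (fun l => lmarginal_layerDens f0 (hBpd l) fM) Finset.univ
  simp only [Finset.mem_univ, Finset.filter_true, lmarginal_univ, Finset.prod_fn] at h
  exact congrFun h 0

lemma integral_prod_layerDens (hA : ∀ l i j, Measurable fun x => A l x i j)
    (hB : ∀ l i j, Measurable fun x => B l x i j) (hBpd : ∀ l x, (B l x).PosDef)
    (fM : IndIx K m → ℝ) :
    ∫ u, ∏ l, layerDens f0 A B l (Sum.elim u fM) = 1 := by
  have hpos (u) (l) : 0 ≤ layerDens f0 A B l (Sum.elim u fM) := (layerDens_pos f0 (hBpd l) _).le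
  have hmeas : Measurable fun u => ∏ l, layerDens f0 A B l (Sum.elim u fM) :=
    Finset.measurable_prod _ fun l _ =>
      (measurable_layerDens f0 (hA l) (hB l)).comp (measurable_sumElim_left fM)
  rw [integral_eq_lintegral_of_nonneg_ae
    (.of_forall fun u => Finset.prod_nonneg fun l _ => hpos u l) hmeas.aestronglyMeasurable]
  simp only [ENNReal.ofReal_prod_of_nonneg fun l _ => hpos _ l,
    lintegral_prod_layerDens f0 hA hB hBpd, ENNReal.toReal_one]

end Layers

section Densities

variable {K N : ℕ} {T : Fin (K + 2) → ℕ} {m : Fin (K + 1) → ℕ}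
  (f0 : Fin N × Fin (T 0) → ℝ)
  (μM : IndIx K m → ℝ) {SM : Matrix (IndIx K m) (IndIx K m) ℝ}
  {A : ∀ l : Fin (K + 1), ((Fin N × Fin (T l.castSucc)) → ℝ) →
    Matrix (Fin N × Fin (T l.succ)) (Fin (m l)) ℝ}
  {B : ∀ l : Fin (K + 1), ((Fin N × Fin (T l.castSucc)) → ℝ) →
    Matrix (Fin N × Fin (T l.succ)) (Fin N × Fin (T l.succ)) ℝ}

/-- The prior density `∏_l N(f_M^l; 0, P^l)` of the inducing outputs. -/
def inducingPrior (P : ∀ l : Fin (K + 1), Matrix (Fin (m l)) (Fin (m l)) ℝ)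
    (fM : IndIx K m → ℝ) : ℝ :=
  ∏ l : Fin (K + 1), gaussPDF (0 : Fin (m l) → ℝ) (P l) fun c => fM ⟨l, c⟩

lemma inducingPrior_pos {P : ∀ l : Fin (K + 1), Matrix (Fin (m l)) (Fin (m l)) ℝ}
    (hP : ∀ l, (P l).PosDef) (fM : IndIx K m → ℝ) : 0 < inducingPrior P fM :=
  Finset.prod_pos fun l _ => gaussPDF_pos 0 (hP l) _

lemma measurable_inducingPrior (P : ∀ l : Fin (K + 1), Matrix (Fin (m l)) (Fin (m l)) ℝ) :
    Measurable (inducingPrior P) :=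
  Finset.measurable_prod _ fun l _ => (measurable_gaussPDF 0 (P l)).comp (by fun_prop)

lemma qdens_pos (hSM : SM.PosDef) (hBpd : ∀ l x, (B l x).PosDef)
    (w : LatentIx K N T ⊕ IndIx K m → ℝ) : 0 < qdens f0 μM SM A B w :=
  mul_pos (gaussPDF_pos μM hSM _) (Finset.prod_pos fun l _ => layerDens_pos f0 (hBpd l) w)

lemma measurable_qdens (hA : ∀ l i j, Measurable fun x => A l x i j)
    (hB : ∀ l i j, Measurable fun x => B l x i j) : Measurable (qdens f0 μM SM A B) :=
  ((measurable_gaussPDF μM SM).comp (by fun_prop)).mul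
    (Finset.measurable_prod _ fun l _ => measurable_layerDens f0 (hA l) (hB l))

lemma integral_qdens_latent (hA : ∀ l i j, Measurable fun x => A l x i j)
    (hB : ∀ l i j, Measurable fun x => B l x i j) (hBpd : ∀ l x, (B l x).PosDef)
    (fM : IndIx K m → ℝ) :
    ∫ u, qdens f0 μM SM A B (Sum.elim u fM) = gaussPDF μM SM fM := by
  calc ∫ u, qdens f0 μM SM A B (Sum.elim u fM)
      = ∫ u, gaussPDF μM SM fM * ∏ l, layerDens f0 A B l (Sum.elim u fM) := rfl
    _ = gaussPDF μM SM fM := by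
      rw [integral_const_mul, integral_prod_layerDens f0 hA hB hBpd, mul_one]

lemma integrable_qdens (hSM : SM.PosDef) (hA : ∀ l i j, Measurable fun x => A l x i j)
    (hB : ∀ l i j, Measurable fun x => B l x i j) (hBpd : ∀ l x, (B l x).PosDef) :
    Integrable (qdens f0 μM SM A B) := by
  have hglue := measurePreserving_glue (Equiv.sumComm (IndIx K m) (LatentIx K N T))
  have hmeas := (measurable_qdens f0 μM (SM := SM) hA hB).comp hglue.measurable
  rw [← hglue.integrable_comp_emb (glue _).measurableEmbedding]
  refine (integrable_prod_iff hmeas.aestronglyMeasurable).mpr ⟨.of_forall fun fM => ?_, ?_⟩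
  · refine .of_integral_ne_zero ?_
    simp only [Function.comp_apply, glue_sumComm, integral_qdens_latent f0 μM hA hB hBpd]
    exact (gaussPDF_pos μM hSM fM).ne'
  · simp only [Function.comp_apply, glue_sumComm,
      Real.norm_of_nonneg (qdens_pos f0 μM hSM hBpd _).le,
      integral_qdens_latent f0 μM hA hB hBpd]
    exact integrable_gaussPDF μM hSM

lemma integrable_and_integral_qdens_mul_inducing (hSM : SM.PosDef)
    (hA : ∀ l i j, Measurable fun x => A l x i j)
    (hB : ∀ l i j, Measurable fun x => B l x i j) (hBpd : ∀ l x, (B l x).PosDef)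
    {φ : (IndIx K m → ℝ) → ℝ} (hφ : AEStronglyMeasurable φ)
    (hint : Integrable fun fM => gaussPDF μM SM fM * φ fM) :
    Integrable (fun w => qdens f0 μM SM A B w * φ fun k => w (Sum.inr k)) ∧
      ∫ w, qdens f0 μM SM A B w * φ (fun k => w (Sum.inr k)) =
        ∫ fM, gaussPDF μM SM fM * φ fM := by
  have hmarginal (fM) :
      ∫ u, qdens f0 μM SM A B (glue (Equiv.sumComm (IndIx K m) (LatentIx K N T)) (fM, u)) =
        gaussPDF μM SM fM := by
    simp only [glue_sumComm, integral_qdens_latent f0 μM hA hB hBpd]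
  have h := integrable_and_integral_mul_comp_eq (Equiv.sumComm (IndIx K m) (LatentIx K N T))
    (integrable_qdens f0 μM hSM hA hB hBpd) (fun w => (qdens_pos f0 μM hSM hBpd w).le) hφ
    (by simpa only [hmarginal] using hint)
  simp only [hmarginal] at h
  exact h

/-- The splitting of the latent coordinates into the final-layer output of data point `n` and the
remaining ones. -/
def outputSumRest (n : Fin N) :
    Fin (T (Fin.last (K + 1))) ⊕ RestIx K N T n ≃ LatentIx K N T :=
  .ofBijective
    (Sum.elim (fun i => ⟨⟨Fin.last (K + 1), n, i⟩, Fin.last_pos.ne'⟩) fun r => ⟨r.1, r.2.1⟩) <| by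
    constructor
    · refine Function.Injective.sumElim (fun i j h => ?_) (fun r r' h => ?_) fun i r h => ?_
      · simpa using h
      · exact Subtype.ext (Subtype.mk.inj h)
      · have hr : ⟨Fin.last (K + 1), n, i⟩ = r.1 := Subtype.mk.inj h
        exact r.2.2 (hr ▸ ⟨rfl, rfl⟩)
    · rintro ⟨⟨j, n', i⟩, hj⟩
      by_cases h : j = Fin.last (K + 1) ∧ n' = n
      · obtain ⟨rfl, rfl⟩ := h
        exact ⟨Sum.inl i, rfl⟩
      · exact ⟨Sum.inr ⟨⟨j, n', i⟩, hj, h⟩, rfl⟩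

/-- The splitting of all random coordinates, inducing outputs included, into the final-layer output
of data point `n` and the coordinates that `qmarg` integrates out. -/
def outputSumRestInducing (m : Fin (K + 1) → ℕ) (n : Fin N) :
    Fin (T (Fin.last (K + 1))) ⊕ (RestIx K N T n ⊕ IndIx K m) ≃ LatentIx K N T ⊕ IndIx K m :=
  (Equiv.sumAssoc _ _ _).symm.trans (Equiv.sumCongr (outputSumRest n) (.refl _))

lemma glue_outputSumRestInducing (n : Fin N) (y : Fin (T (Fin.last (K + 1))) → ℝ)
    (v : RestIx K N T n ⊕ IndIx K m → ℝ) :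
    glue (outputSumRestInducing m n) (y, v) = reassemble n y v := by
  refine funext fun x => ?_
  obtain ⟨i, rfl⟩ := (outputSumRestInducing m n).surjective x
  rw [glue_apply]
  rcases i with i | r | k
  · symm
    exact dif_pos ⟨rfl, rfl⟩
  · symm
    exact dif_neg r.2.2
  · rfl

lemma integrable_and_integral_qdens_mul_output (hSM : SM.PosDef)
    (hA : ∀ l i j, Measurable fun x => A l x i j)
    (hB : ∀ l i j, Measurable fun x => B l x i j) (hBpd : ∀ l x, (B l x).PosDef) (n : Fin N)
    {φ : (Fin (T (Fin.last (K + 1))) → ℝ) → ℝ} (hφ : AEStronglyMeasurable φ)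
    (hint : Integrable fun y => qmarg f0 μM SM A B n y * φ y) :
    Integrable (fun w => qdens f0 μM SM A B w *
        φ fun i => traj f0 w ⟨Fin.last (K + 1), n, i⟩) ∧
      ∫ w, qdens f0 μM SM A B w * φ (fun i => traj f0 w ⟨Fin.last (K + 1), n, i⟩) =
        ∫ y, qmarg f0 μM SM A B n y * φ y := by
  have hmarginal (y) : ∫ v, qdens f0 μM SM A B (glue (outputSumRestInducing m n) (y, v)) =
      qmarg f0 μM SM A B n y := by
    simp only [glue_outputSumRestInducing, qmarg]
  have h := integrable_and_integral_mul_comp_eq (outputSumRestInducing m n)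
    (integrable_qdens f0 μM hSM hA hB hBpd) (fun w => (qdens_pos f0 μM hSM hBpd w).le) hφ
    (by simpa only [hmarginal] using hint)
  simp only [hmarginal] at h
  exact h

lemma log_pdens_div_qdens {P : ∀ l : Fin (K + 1), Matrix (Fin (m l)) (Fin (m l)) ℝ}
    {pLik : Fin N → (Fin (T (Fin.last (K + 1))) → ℝ) → ℝ} (hSM : SM.PosDef)
    (hBpd : ∀ l x, (B l x).PosDef) (hP : ∀ l, (P l).PosDef) (hpPos : ∀ n x, 0 < pLik n x)
    (w : LatentIx K N T ⊕ IndIx K m → ℝ) :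
    Real.log (pdens f0 pLik A B P w / qdens f0 μM SM A B w) =
      ∑ n, Real.log (pLik n fun i => traj f0 w ⟨Fin.last (K + 1), n, i⟩) -
        Real.log (gaussPDF μM SM (fun k => w (Sum.inr k)) /
          inducingPrior P fun k => w (Sum.inr k)) := by
  set fM : IndIx K m → ℝ := fun k => w (Sum.inr k)
  set lik := ∏ n, pLik n fun i => traj f0 w ⟨Fin.last (K + 1), n, i⟩ with hlik
  have hlik_ne : lik ≠ 0 := (Finset.prod_pos fun n _ => hpPos n _).ne'
  have hlayers : ∏ l, layerDens f0 A B l w ≠ 0 :=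
    (Finset.prod_pos fun l _ => layerDens_pos f0 (hBpd l) w).ne'
  have hgauss : gaussPDF μM SM fM ≠ 0 := (gaussPDF_pos μM hSM fM).ne'
  have hprior : inducingPrior P fM ≠ 0 := (inducingPrior_pos hP fM).ne'
  have hcancel : pdens f0 pLik A B P w / qdens f0 μM SM A B w =
      lik / (gaussPDF μM SM fM / inducingPrior P fM) := by
    change lik * (∏ l, layerDens f0 A B l w) * inducingPrior P fM /
      (gaussPDF μM SM fM * ∏ l, layerDens f0 A B l w) = _
    field_simp
  rw [hcancel, Real.log_div hlik_ne (div_ne_zero hgauss hprior), hlik,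
    Real.log_prod fun n _ => (hpPos n _).ne']

end Densities

theorem elbo_decomposition_general (K N : ℕ)
    (T : Fin (K + 2) → ℕ) (m : Fin (K + 1) → ℕ)
    (f0 : Fin N × Fin (T 0) → ℝ)
    (μM : IndIx K m → ℝ) (SM : Matrix (IndIx K m) (IndIx K m) ℝ) (hSM : SM.PosDef)
    (A : ∀ l : Fin (K + 1), ((Fin N × Fin (T l.castSucc)) → ℝ) →
      Matrix (Fin N × Fin (T l.succ)) (Fin (m l)) ℝ)
    (B : ∀ l : Fin (K + 1), ((Fin N × Fin (T l.castSucc)) → ℝ) →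
      Matrix (Fin N × Fin (T l.succ)) (Fin N × Fin (T l.succ)) ℝ)
    (hAmeas : ∀ l i j, Measurable fun x => A l x i j)
    (hBmeas : ∀ l i j, Measurable fun x => B l x i j)
    (hBpd : ∀ l x, (B l x).PosDef)
    (P : ∀ l : Fin (K + 1), Matrix (Fin (m l)) (Fin (m l)) ℝ)
    (hP : ∀ l, (P l).PosDef)
    (pLik : Fin N → (Fin (T (Fin.last (K + 1))) → ℝ) → ℝ)
    (hpPos : ∀ n x, 0 < pLik n x) (hpMeas : ∀ n, Measurable (pLik n))
    (hlik : ∀ n : Fin N, Integrable fun y : Fin (T (Fin.last (K + 1))) → ℝ =>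
      qmarg f0 μM SM A B n y * Real.log (pLik n y))
    (hKL : Integrable fun fM : IndIx K m → ℝ =>
      gaussPDF μM SM fM * Real.log (gaussPDF μM SM fM / inducingPrior P fM)) :
    (Integrable fun w : (LatentIx K N T ⊕ IndIx K m) → ℝ =>
      qdens f0 μM SM A B w * Real.log (pdens f0 pLik A B P w / qdens f0 μM SM A B w)) ∧
    (∫ w : (LatentIx K N T ⊕ IndIx K m) → ℝ,
        qdens f0 μM SM A B w * Real.log (pdens f0 pLik A B P w / qdens f0 μM SM A B w)) =
      (∑ n : Fin N, ∫ y : Fin (T (Fin.last (K + 1))) → ℝ,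
          qmarg f0 μM SM A B n y * Real.log (pLik n y)) -
        ∫ fM : IndIx K m → ℝ,
          gaussPDF μM SM fM * Real.log (gaussPDF μM SM fM / inducingPrior P fM) := by
  have houtput (n : Fin N) := integrable_and_integral_qdens_mul_output f0 μM hSM hAmeas hBmeas
    hBpd n (hpMeas n).log.aestronglyMeasurable (hlik n)
  have hratio : Measurable fun fM => Real.log (gaussPDF μM SM fM / inducingPrior P fM) :=
    ((measurable_gaussPDF μM SM).div (measurable_inducingPrior P)).log
  have hinducing := integrable_and_integral_qdens_mul_inducing f0 μM hSM hAmeas hBmeas hBpd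
    hratio.aestronglyMeasurable hKL
  simp only [log_pdens_div_qdens f0 μM hSM hBpd hP hpPos, mul_sub, Finset.mul_sum]
  have hsum := integrable_finsetSum Finset.univ fun n _ => (houtput n).1
  refine ⟨hsum.sub hinducing.1, ?_⟩
  rw [integral_sub hsum hinducing.1, integral_finsetSum _ fun n _ => (houtput n).1, hinducing.2]
  simp only [fun n => (houtput n).2]

/-- **Evidence lower bound decomposition for the DGP variational family.**
`∫ q log(p/q) = Σ_n ∫ q_n log p_n − KL(q(f_M) ‖ ∏_l N(f_M^l; 0, P^l))`. -/
theorem elbo_decomposition (K N : ℕ) (hN : 1 ≤ N)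
    (T : Fin (K + 2) → ℕ) (m : Fin (K + 1) → ℕ)
    (f0 : Fin N × Fin (T 0) → ℝ)
    (μM : IndIx K m → ℝ) (SM : Matrix (IndIx K m) (IndIx K m) ℝ) (hSM : SM.PosDef)
    (A : ∀ l : Fin (K + 1), ((Fin N × Fin (T l.castSucc)) → ℝ) →
      Matrix (Fin N × Fin (T l.succ)) (Fin (m l)) ℝ)
    (B : ∀ l : Fin (K + 1), ((Fin N × Fin (T l.castSucc)) → ℝ) →
      Matrix (Fin N × Fin (T l.succ)) (Fin N × Fin (T l.succ)) ℝ)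
    (hAmeas : ∀ l i j, Measurable fun x => A l x i j)
    (hBmeas : ∀ l i j, Measurable fun x => B l x i j)
    (hBpd : ∀ l x, (B l x).PosDef)
    (P : ∀ l : Fin (K + 1), Matrix (Fin (m l)) (Fin (m l)) ℝ)
    (hP : ∀ l, (P l).PosDef)
    (pLik : Fin N → (Fin (T (Fin.last (K + 1))) → ℝ) → ℝ)
    (hpPos : ∀ n x, 0 < pLik n x) (hpMeas : ∀ n, Measurable (pLik n))
    (hI1 : Integrable fun w : (LatentIx K N T ⊕ IndIx K m) → ℝ =>
      qdens f0 μM SM A B w * Real.log (pdens f0 pLik A B P w / qdens f0 μM SM A B w))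
    (hI2 : ∀ (n : Fin N) (y : Fin (T (Fin.last (K + 1))) → ℝ),
      Integrable fun v : (RestIx K N T n ⊕ IndIx K m) → ℝ =>
        qdens f0 μM SM A B (reassemble n y v))
    (hI3 : ∀ n : Fin N, Integrable fun y : Fin (T (Fin.last (K + 1))) → ℝ =>
      qmarg f0 μM SM A B n y * Real.log (pLik n y))
    (hI4 : Integrable fun fM : IndIx K m → ℝ =>
      gaussPDF μM SM fM *
        Real.log (gaussPDF μM SM fM /
          ∏ l : Fin (K + 1), gaussPDF (0 : Fin (m l) → ℝ) (P l) fun c => fM ⟨l, c⟩)) :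
    (∫ w : (LatentIx K N T ⊕ IndIx K m) → ℝ,
        qdens f0 μM SM A B w * Real.log (pdens f0 pLik A B P w / qdens f0 μM SM A B w)) =
      (∑ n : Fin N, ∫ y : Fin (T (Fin.last (K + 1))) → ℝ,
          qmarg f0 μM SM A B n y * Real.log (pLik n y)) -
        ∫ fM : IndIx K m → ℝ,
          gaussPDF μM SM fM *
            Real.log (gaussPDF μM SM fM /
              ∏ l : Fin (K + 1), gaussPDF (0 : Fin (m l) → ℝ) (P l) fun c => fM ⟨l, c⟩) :=
  (elbo_decomposition_general K N T m f0 μM SM hSM A B hAmeas hBmeas hBpd P hP pLik hpPos hpMeas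
    hI3 hI4).2

end
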